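/- Let A be a unital C*-algebra and let V₀, V₁ ∈ A be self-adjoint unitaries such that V₁ − V₀ is invertible in A. Define F := ½·V₀(V₁V₀+1)(V₁V₀−1)⁻¹·s, where s is the positive square root of 2 − V₀V₁ − V₁V₀. Then F² = ¼·(2 + V₀V₁ + V₁V₀) and 1 − F² = ¼·(V₀−V₁)². -/

import Mathlib

/-- For self-adjoint unitaries `V₀, V₁` with `V₁ − V₀` invertible, the
bounded transform `F = ½ V₀(V₁V₀+1)(V₁V₀−1)⁻¹ s`, where `s` is the positive square root
of `2 − V₀V₁ − V₁V₀`, satisfies `F² = ¼(2 + V₀V₁ + V₁V₀)` and `1 − F² = ¼(V₀−V₁)²`. -/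
theorem bounded_transform_sq {A : Type*} [CStarAlgebra A] [PartialOrder A]
    [StarOrderedRing A]
    (V₀ V₁ : A) (hV₀sa : star V₀ = V₀) (hV₀sq : V₀ ^ 2 = 1)
    (hV₁sa : star V₁ = V₁) (hV₁sq : V₁ ^ 2 = 1)
    (hinv : IsUnit (V₁ - V₀))
    (s : A) (hs : s = CFC.sqrt (2 - V₀ * V₁ - V₁ * V₀))
    (F : A) (hF : F = (1 / 2 : ℂ) • (V₀ * (V₁ * V₀ + 1) * Ring.inverse (V₁ * V₀ - 1) * s)) :
    F ^ 2 = (1 / 4 : ℂ) • (2 + V₀ * V₁ + V₁ * V₀) ∧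
      1 - F ^ 2 = (1 / 4 : ℂ) • (V₀ - V₁) ^ 2 := by
  have ha : V₀ * V₀ = 1 := by rw [← sq, hV₀sq]
  have hb : V₁ * V₁ = 1 := by rw [← sq, hV₁sq]
  have ha' (x : A) : V₀ * (V₀ * x) = x := by rw [← mul_assoc, ha, one_mul]
  have hb' (x : A) : V₁ * (V₁ * x) = x := by rw [← mul_assoc, hb, one_mul]
  have hsq : (V₀ - V₁) ^ 2 = 2 - V₀ * V₁ - V₁ * V₀ := by
    rw [sq, sub_mul, mul_sub, mul_sub, ha, hb, ← one_add_one_eq_two]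
    abel
  have hpos : 0 ≤ 2 - V₀ * V₁ - V₁ * V₀ := by
    have h := star_mul_self_nonneg (V₀ - V₁)
    rwa [star_sub, hV₀sa, hV₁sa, ← sq, hsq] at h
  have hss : s * s = (V₁ - V₀) * (V₁ - V₀) := by
    rw [hs, CFC.sqrt_mul_sqrt_self _ hpos, ← hsq]
    noncomm_ring
  have hcomm {x : A} (hx : Commute (2 - V₀ * V₁ - V₁ * V₀) x) : Commute s x := by
    rw [hs, CFC.sqrt_eq_cfc]
    exact hx.cfc_nnreal _
  have hs₀ : Commute s V₀ := hcomm <| by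
    simp only [commute_iff_eq, sub_mul, mul_sub, mul_assoc, ha, ha', two_mul, mul_two, mul_one]
    abel
  have hs₁ : Commute s V₁ := hcomm <| by
    simp only [commute_iff_eq, sub_mul, mul_sub, mul_assoc, hb, hb', two_mul, mul_two, mul_one]
    abel
  have hunit : IsUnit (V₁ * V₀ - 1) := by
    rw [← ha, ← sub_mul]
    exact hinv.mul (Units.mk V₀ V₀ ha ha).isUnit
  have hsR : Commute s (Ring.inverse (V₁ * V₀ - 1)) := by
    have h : Commute s (V₁ * V₀ - 1) := (hs₁.mul_right hs₀).sub_right (.one_right s)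
    obtain ⟨u, hu⟩ := hunit
    rw [← hu] at h ⊢
    rw [Ring.inverse_unit]
    exact h.units_inv_right
  set T := V₀ * (V₁ * V₀ + 1) * Ring.inverse (V₁ * V₀ - 1) with hT
  have hsT : Commute s T :=
    (hs₀.mul_right ((hs₁.mul_right hs₀).add_right (.one_right s))).mul_right hsR
  have hTD : T * (V₁ - V₀) = 1 + V₀ * V₁ := by
    have hD : V₁ - V₀ = (V₁ * V₀ - 1) * V₀ := by
      rw [sub_mul, mul_assoc, ha, mul_one, one_mul]
    rw [hD, hT, mul_assoc, Ring.inverse_mul_cancel_left _ _ hunit]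
    simp only [mul_add, add_mul, mul_assoc, ha, mul_one]
    abel
  have hX : (1 + V₀ * V₁) * (V₁ - V₀) = (V₁ - V₀) * (1 + V₁ * V₀) := by
    simp only [mul_add, add_mul, mul_sub, sub_mul, mul_assoc, hb, hb', mul_one, one_mul]
    abel
  have hTs : T * s * (T * s) = 2 + V₀ * V₁ + V₁ * V₀ := calc
    T * s * (T * s) = T * (T * (V₁ - V₀) * (V₁ - V₀)) := by
      rw [mul_assoc, ← mul_assoc s, hsT.eq, mul_assoc T s s, hss, mul_assoc T (V₁ - V₀)]
    _ = (1 + V₀ * V₁) * (1 + V₁ * V₀) := by rw [hTD, hX, ← mul_assoc, hTD]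
    _ = 2 + V₀ * V₁ + V₁ * V₀ := by
      simp only [mul_add, add_mul, mul_assoc, ha, hb', mul_one, one_mul, ← one_add_one_eq_two]
      abel
  have hF2 : F ^ 2 = (1 / 4 : ℂ) • (2 + V₀ * V₁ + V₁ * V₀) := by
    rw [hF, smul_pow, sq (T * s), hTs]
    norm_num
  refine ⟨hF2, ?_⟩
  have h1 : (1 : A) = (1 / 4 : ℂ) • (2 + 2) := by
    rw [← one_add_one_eq_two (R := A)]
    module
  rw [hF2, hsq, h1, ← smul_sub]
  congr 1
  abel
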